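/- For every x ∈ A_𝒪 and k ∈ ℤ/12 one has (1/3)(1 + ω)·ψ(x, ηᵏ) ∈ 𝒪, so the formula T̂ₖ(x) := x − (1/3)(1 + ω)·ψ(x, ηᵏ)·ηᵏ defines an 𝒪-linear endomorphism of A_𝒪. Each T̂ₖ is a ψ-unitary automorphism of A_𝒪 of order exactly 3, and the braid relations hold: T̂ₖ T̂ₖ₊₁ T̂ₖ = T̂ₖ₊₁ T̂ₖ T̂ₖ₊₁ for all k ∈ ℤ/12, and T̂ₖ T̂ₗ = T̂ₗ T̂ₖ whenever k − l ≢ ±1 (mod 12). -/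

import Mathlib

open Polynomial

noncomputable section

/-- The Eisenstein ring `𝒪 = ℤ[ω]`, where `ω = e^{2πi/6}` is a primitive sixth root of
unity (so `ω² - ω + 1 = 0`), presented as `ℤ[X]/(X² - X + 1)`. -/
abbrev O : Type := AdjoinRoot (X ^ 2 - X + 1 : ℤ[X])

/-- `ω`, the distinguished primitive sixth root of unity in `𝒪`. -/
def ω : O := AdjoinRoot.root _

lemma ω_sq : ω ^ 2 - ω + 1 = 0 := by
  have h := AdjoinRoot.eval₂_root (X ^ 2 - X + 1 : ℤ[X])
  simpa [ω, eval₂_add, eval₂_sub, eval₂_pow, eval₂_X, eval₂_one] using h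

/-- Complex conjugation on the Eisenstein ring: the ring involution with
`conj ω = 1 - ω = ω⁻¹`. -/
def conj : O →+* O :=
  AdjoinRoot.lift (algebraMap ℤ O) (1 - ω) (by
    have h := ω_sq
    simp only [eval₂_add, eval₂_sub, eval₂_pow, eval₂_X, eval₂_one]
    ring_nf
    ring_nf at h
    linear_combination h)

/-- `θ := ω - ω⁻¹ = ω - conj ω = 2ω - 1`, a square root of `-3` in `𝒪`. -/
def θ : O := ω - conj ω

/-- `𝒪[η]/(η¹² − 1)`, modelled as coefficient vectors with respect to the 𝒪-basis
`1, η, η², …, η¹¹`. -/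
abbrev B12 : Type := Fin 12 → O

/-- The monomial `ηᵃ` as an element of `𝒪[η]/(η¹² − 1)`. -/
def ηpow (a : Fin 12) : B12 := Pi.single a 1

/-- Multiplication by `η` on `𝒪[η]/(η¹² − 1)`: the cyclic shift of coefficients. -/
def S (x : B12) : B12 := fun a => x (a - 1)

/-- The coefficient function `F` of the Hermitian form `ψ₀`: `F(0) = 3`,
`F(11) = −1 − ω`, `F(1) = −1 − ω⁻¹` (note `ω⁻¹ = ω⁵`), and `F(k) = 0` otherwise. -/
def F12 : Fin 12 → O := fun k =>
  if k = 0 then 3 else if k = 11 then -1 - ω else if k = 1 then -1 - ω ^ 5 else 0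

/-- The Hermitian form `ψ₀` on `𝒪[η]/(η¹² − 1)`: 𝒪-linear in the first variable,
conjugate-linear in the second, with `ψ₀(ηᵃ, ηᵇ) = F(a − b mod 12)`. -/
def psi0 (x y : B12) : O := ∑ a : Fin 12, ∑ b : Fin 12, x a * conj (y b) * F12 (a - b)

/-- `Σᵢ₌₀¹¹ ηⁱ`. -/
def σ₁ : B12 := fun _ => 1

/-- `Σᵢ₌₀¹¹ (ωη)ⁱ`. -/
def σ₂ : B12 := fun a => ω ^ (a : ℕ)

/-- The 𝒪-submodule of `𝒪[η]/(η¹² − 1)` underlying the ideal `(h)`, where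
`h = (η¹² − 1)/((η − 1)(η − ω⁻¹))`.  Indeed `(h) = (Σηⁱ, Σ(ωη)ⁱ)` (both generators are
multiples of `h`, and `h` is an 𝒪[η]-combination of them since `ω⁻¹ − 1` is a unit),
and as an 𝒪-module this ideal is spanned by `Σηⁱ` and `Σ(ωη)ⁱ` alone, because
`η·Σηⁱ = Σηⁱ` and `η·Σ(ωη)ⁱ = ω⁻¹·Σ(ωη)ⁱ`. -/
def N : Submodule O B12 := Submodule.span O {σ₁, σ₂}

/-- `A_𝒪 = 𝒪[η]/(h)`, a free 𝒪-module of rank 10. -/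
abbrev A12 : Type := B12 ⧸ N

/-- The quotient map `𝒪[η]/(η¹² − 1) → A_𝒪`. -/
def mkA : B12 → A12 := Submodule.Quotient.mk

/-- The image `s_i` in `A_𝒪` of `(ω²η)^i`, for `i = 1, …, 10` (indexed by `Fin 10`,
so `sB i` is `s_{i+1}`). -/
def sB (i : Fin 10) : A12 :=
  mkA (ω ^ (2 * ((i : ℕ) + 1)) • ηpow (Fin.castLE (by omega) i.succ))

/-!
On `𝒪[η]/(η¹² − 1)` the form factors as `ψ₀(x, ηᵏ) = (2 − ω) · φₖ(x)`, where
`φₖ(x) = (1 + ω) xₖ − ω xₖ₋₁ − xₖ₊₁` kills `Σ ηⁱ` and `Σ (ωη)ⁱ`. Since `(1 + ω)(2 − ω) = 3`, the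
functional `φₖ` is the coroot `(1/3)(1 + ω) ψ(·, ηᵏ)`, and `T̂ₖ` is the complex reflection
`x ↦ x − φₖ(x) ηᵏ`. As for any pseudo-reflections, the asserted relations depend only on the
numbers `φₖ(ηˡ)`: the eigenvalue `1 − φₖ(ηᵏ) = −ω` is a primitive cube root of unity, the braid
relation is `φₖ(ηᵏ) = 1 + φₖ(ηᵏ⁺¹) φₖ₊₁(ηᵏ)` and its mirror image, and unitarity is
`(2 − ω) + conj (2 − ω) = 3 = ψ(ηᵏ, ηᵏ)`.
-/

section PreReflection

open Module

variable {R M : Type*} [CommRing R] [AddCommGroup M] [Module R M] {f g : Dual R M} {u v : M}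

lemma preReflection_pow_apply (v : M) (f : Dual R M) (n : ℕ) (x : M) :
    (preReflection v f ^ n) x = x - (f x * ∑ i ∈ Finset.range n, (1 - f v) ^ i) • v := by
  induction n with
  | zero => simp
  | succ n ih =>
    rw [pow_succ', Module.End.mul_apply, ih, preReflection_apply, geom_sum_succ]
    simp only [map_sub, map_smul, smul_eq_mul]
    module

lemma preReflection_pow_eq_one {n : ℕ} (h : ∑ i ∈ Finset.range n, (1 - f v) ^ i = 0) :
    preReflection v f ^ n = 1 := by
  ext x
  simp [preReflection_pow_apply, h]

lemma preReflection_ne_one (h : f v ^ 2 ≠ 0) : preReflection v f ≠ 1 := by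
  intro h_one
  have h_fixed : v - f v • v = v := by
    rw [← preReflection_apply, h_one, Module.End.one_apply]
  have h_zero : f v • v = 0 := sub_eq_self.mp h_fixed
  apply h
  rw [sq, ← smul_eq_mul, ← map_smul, h_zero, map_zero]

lemma preReflection_commute (hfv : f v = 0) (hgu : g u = 0) :
    Commute (preReflection u f) (preReflection v g) := by
  ext x
  simp only [Module.End.mul_apply, preReflection_apply, map_sub, map_smul, hfv, hgu]
  module

lemma preReflection_braid (hf : f u = 1 + f v * g u) (hg : g v = 1 + f v * g u) :
    preReflection u f * preReflection v g * preReflection u f =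
      preReflection v g * preReflection u f * preReflection v g := by
  ext x
  simp only [Module.End.mul_apply, preReflection_apply, map_sub, map_smul, hf, hg]
  module

lemma preReflection_isometry {σ : R →+* R} {B : M →ₗ[R] M →ₛₗ[σ] R}
    (hB : ∀ x y, B y x = σ (B x y)) {b : R} (hf : ∀ x, B x v = b * f x)
    (hb : b + σ b = B v v) (x y : M) :
    B (preReflection v f x) (preReflection v f y) = B x y := by
  have hf' : B v y = σ b * σ (f y) := by rw [hB y v, hf, map_mul]
  simp only [preReflection_apply, map_sub, map_smulₛₗ, LinearMap.sub_apply, LinearMap.smul_apply,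
    RingHom.id_apply, smul_eq_mul, hf x, hf', ← hb]
  ring

end PreReflection

section Eisenstein

lemma monic_X_sq_sub_X_add_one : (X ^ 2 - X + 1 : ℤ[X]).Monic := by monicity!

lemma isLeftRegular_three : IsLeftRegular (3 : O) := by
  have : Module.Free ℤ O := .of_basis (AdjoinRoot.powerBasis' monic_X_sq_sub_X_add_one).basis
  intro a b h
  exact smul_right_injective O (three_ne_zero : (3 : ℤ) ≠ 0) (by simpa [zsmul_eq_mul] using h)

lemma nontrivial_O : Nontrivial O := by
  refine AdjoinRoot.nontrivial _ ?_
  have h_degree : (X ^ 2 - X + 1 : ℤ[X]).degree = 2 := by compute_degree!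
  simp [h_degree]

lemma ω_pow_five : ω ^ 5 = 1 - ω := by
  linear_combination (ω ^ 3 + ω ^ 2 - 1) * ω_sq

lemma ω_pow_twelve : ω ^ 12 = 1 := by
  have h_six : ω ^ 6 = 1 := by
    linear_combination (ω ^ 4 + ω ^ 3 - ω - 1) * ω_sq
  rw [pow_mul ω 6 2, h_six, one_pow]

lemma one_add_ω_mul_two_sub_ω : (1 + ω) * (2 - ω) = 3 := by
  linear_combination -ω_sq

lemma one_add_ω_sq_ne_zero : (1 + ω) ^ 2 ≠ 0 := by
  intro h
  have := nontrivial_O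
  have h_three : (3 : O) * 1 = 3 * 0 := by
    linear_combination (1 - ω) * h + (2 + ω) * ω_sq
  exact one_ne_zero (isLeftRegular_three h_three)

lemma conj_ω : conj ω = 1 - ω := AdjoinRoot.lift_root _

lemma conj_conj (x : O) : conj (conj x) = x := by
  have h : conj.comp conj = RingHom.id O := by
    refine AdjoinRoot.ringHom_ext (RingHom.ext_int _ _) ?_
    change conj (conj ω) = ω
    simp [conj_ω]
  exact DFunLike.congr_fun h x

end Eisenstein

section CyclicForm

lemma conj_F12 (k : Fin 12) : conj (F12 k) = F12 (-k) := by
  have h3 : conj 3 = 3 := map_ofNat conj 3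
  fin_cases k <;> simp [F12, conj_ω, ω_pow_five, h3, Fin.ext_iff, Fin.neg_def]

lemma psi0_conj_symm (x y : B12) : psi0 y x = conj (psi0 x y) := by
  simp only [psi0, map_sum, map_mul, conj_conj, conj_F12, neg_sub]
  rw [Finset.sum_comm]
  exact Finset.sum_congr rfl fun a _ => Finset.sum_congr rfl fun b _ => by ring

/-- The functional `(1/3)(1 + ω) ψ₀(·, ηᵏ)` on `𝒪[η]/(η¹² − 1)`, with the division carried out. -/
def coroot₀ (k : Fin 12) : Module.Dual O B12 :=
  (1 + ω) • LinearMap.proj k - ω • LinearMap.proj (k - 1) - LinearMap.proj (k + 1)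

lemma coroot₀_apply (k : Fin 12) (x : B12) :
    coroot₀ k x = (1 + ω) * x k - ω * x (k - 1) - x (k + 1) := by
  simp [coroot₀]

lemma sum_mul_F12_sub (x : B12) (k : Fin 12) :
    ∑ a, x a * F12 (a - k) = (2 - ω) * coroot₀ k x := by
  have h_support : ∀ a, F12 (a - k) =
      (if a = k then 3 else 0) + (if a = k - 1 then -1 - ω else 0) +
        (if a = k + 1 then -1 - ω ^ 5 else 0) := by
    intro a
    obtain ⟨d, rfl⟩ : ∃ d, a = d + k := ⟨a - k, by simp⟩
    have h_pred : d + k = k - 1 ↔ d = 11 := by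
      rw [sub_eq_neg_add, add_left_inj]; rfl
    have h_succ : d + k = k + 1 ↔ d = 1 := by rw [add_comm k 1, add_left_inj]
    simp only [add_sub_cancel_right, h_pred, h_succ, add_eq_right]
    fin_cases d <;> simp [F12, Fin.ext_iff]
  simp only [h_support, mul_add, mul_ite, mul_zero, Finset.sum_add_distrib, Finset.sum_ite_eq',
    Finset.mem_univ, if_true, coroot₀_apply, ω_pow_five]
  linear_combination (x k - x (k - 1)) * ω_sq

lemma psi0_eq_sum_coroot₀ (x y : B12) :
    psi0 x y = (2 - ω) * ∑ k, conj (y k) * coroot₀ k x := by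
  simp only [psi0]
  rw [Finset.sum_comm, Finset.mul_sum]
  refine Finset.sum_congr rfl fun k _ => ?_
  rw [mul_left_comm, ← sum_mul_F12_sub, Finset.mul_sum]
  exact Finset.sum_congr rfl fun a _ => by ring

lemma psi0_ηpow_right (x : B12) (k : Fin 12) : psi0 x (ηpow k) = (2 - ω) * coroot₀ k x := by
  rw [psi0_eq_sum_coroot₀, Finset.sum_eq_single k]
  · simp [ηpow]
  · intro l _ hl
    simp [ηpow, Pi.single_eq_of_ne hl]
  · simp

lemma coroot₀_σ₁ (k : Fin 12) : coroot₀ k σ₁ = 0 := by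
  simp [coroot₀_apply, σ₁]

lemma σ₂_add_one (a : Fin 12) : σ₂ (a + 1) = ω * σ₂ a := by
  rw [σ₂, σ₂, Fin.val_add, ← pow_eq_pow_mod _ ω_pow_twelve, Fin.val_one, pow_succ']

lemma coroot₀_σ₂ (k : Fin 12) : coroot₀ k σ₂ = 0 := by
  have h_pred : σ₂ k = ω * σ₂ (k - 1) := by rw [← σ₂_add_one, sub_add_cancel]
  rw [coroot₀_apply, σ₂_add_one, ← h_pred]
  ring

lemma N_le_ker_coroot₀ (k : Fin 12) : N ≤ LinearMap.ker (coroot₀ k) :=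
  Submodule.span_le.mpr (Set.pair_subset (coroot₀_σ₁ k) (coroot₀_σ₂ k))

/-- The form `ψ₀` as a bundled sesquilinear map. -/
def psi0Form : B12 →ₗ[O] B12 →ₛₗ[conj] O :=
  LinearMap.mk₂'ₛₗ (RingHom.id O) conj psi0
    (fun x x' y => by
      simp only [psi0_eq_sum_coroot₀, map_add, mul_add, Finset.sum_add_distrib])
    (fun c x y => by
      simp only [psi0_eq_sum_coroot₀, map_smul, smul_eq_mul, RingHom.id_apply, Finset.mul_sum,
        mul_left_comm])
    (fun x y y' => by
      simp only [psi0_eq_sum_coroot₀, Pi.add_apply, map_add, add_mul, mul_add,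
        Finset.sum_add_distrib])
    (fun c x y => by
      simp only [psi0_eq_sum_coroot₀, Pi.smul_apply, smul_eq_mul, map_mul, Finset.mul_sum,
        mul_assoc, mul_left_comm])

lemma psi0Form_isRefl : psi0Form.IsRefl := by
  intro x y h
  change psi0 x y = 0 at h
  change psi0 y x = 0
  rw [psi0_conj_symm, h, map_zero]

lemma N_le_ker_psi0Form : N ≤ LinearMap.ker psi0Form := by
  intro n hn
  ext1 y
  change psi0 n y = 0
  have h_coroot : ∀ k, coroot₀ k n = 0 := fun k => N_le_ker_coroot₀ k hn
  simp [psi0_eq_sum_coroot₀, h_coroot]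

end CyclicForm

section Quotient

/-- The Hermitian form `ψ` on `A_𝒪`. -/
def psiForm : A12 →ₗ[O] A12 →ₛₗ[conj] O :=
  psi0Form_isRefl.liftQ₂ psi0Form N N_le_ker_psi0Form

lemma psiForm_mkA (x y : B12) : psiForm (mkA x) (mkA y) = psi0 x y := rfl

lemma mkA_surjective : Function.Surjective mkA := Submodule.Quotient.mk_surjective N

lemma psiForm_conj_symm (x y : A12) : psiForm y x = conj (psiForm x y) := by
  obtain ⟨x, rfl⟩ := mkA_surjective x
  obtain ⟨y, rfl⟩ := mkA_surjective y
  simp only [psiForm_mkA, ← psi0_conj_symm]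

/-- The functional `(1/3)(1 + ω) ψ(·, ηᵏ)` on `A_𝒪`. -/
def coroot (k : Fin 12) : Module.Dual O A12 := N.liftQ (coroot₀ k) (N_le_ker_coroot₀ k)

lemma coroot_mkA (k : Fin 12) (x : B12) : coroot k (mkA x) = coroot₀ k x := rfl

lemma coroot_ηpow_self (k : Fin 12) : coroot k (mkA (ηpow k)) = 1 + ω := by
  simp [coroot_mkA, coroot₀_apply, ηpow]

lemma coroot_ηpow_add_one (k : Fin 12) : coroot k (mkA (ηpow (k + 1))) = -1 := by
  have h_ne : k - 1 ≠ k + 1 := by grind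
  simp [coroot_mkA, coroot₀_apply, ηpow, h_ne]

lemma coroot_add_one_ηpow (k : Fin 12) : coroot (k + 1) (mkA (ηpow k)) = -ω := by
  have h_ne : k + 1 + 1 ≠ k := by grind
  simp [coroot_mkA, coroot₀_apply, ηpow, h_ne]

lemma coroot_ηpow_eq_zero {k l : Fin 12} (hkl : k ≠ l) (h : k - l ≠ 1) (h' : l - k ≠ 1) :
    coroot k (mkA (ηpow l)) = 0 := by
  have h_pred : k - 1 ≠ l := by grind
  have h_succ : k + 1 ≠ l := by grind
  simp [coroot_mkA, coroot₀_apply, ηpow, hkl, h_pred, h_succ]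

lemma psiForm_ηpow_right (x : A12) (k : Fin 12) :
    psiForm x (mkA (ηpow k)) = (2 - ω) * coroot k x := by
  obtain ⟨x, rfl⟩ := mkA_surjective x
  rw [psiForm_mkA, psi0_ηpow_right, coroot_mkA]

lemma one_add_ω_mul_psiForm_eq_iff {x : A12} {k : Fin 12} {c : O} :
    (1 + ω) * psiForm x (mkA (ηpow k)) = 3 * c ↔ c = coroot k x := by
  rw [psiForm_ηpow_right, ← mul_assoc, one_add_ω_mul_two_sub_ω, eq_comm]
  exact isLeftRegular_three.eq_iff

end Quotient

section Triflection

/-- The complex reflection `T̂ₖ` of order three of `A_𝒪`, with root `ηᵏ`. -/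
def triflection (k : Fin 12) : Module.End O A12 :=
  Module.preReflection (mkA (ηpow k)) (coroot k)

lemma triflection_apply (k : Fin 12) (x : A12) :
    triflection k x = x - coroot k x • mkA (ηpow k) :=
  Module.preReflection_apply _ _ _

lemma orderOf_triflection (k : Fin 12) : orderOf (triflection k) = 3 := by
  refine orderOf_eq_prime (preReflection_pow_eq_one ?_) (preReflection_ne_one ?_)
  · simp only [coroot_ηpow_self, Finset.sum_range_succ, Finset.sum_range_zero]
    linear_combination ω_sq
  · simpa only [coroot_ηpow_self] using one_add_ω_sq_ne_zero

lemma triflection_ne_one (k : Fin 12) : triflection k ≠ 1 := by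
  intro h
  simpa [h] using orderOf_triflection k

lemma triflection_pow_three (k : Fin 12) : triflection k ^ 3 = 1 :=
  orderOf_triflection k ▸ pow_orderOf_eq_one _

lemma triflection_bijective (k : Fin 12) : Function.Bijective (triflection k) :=
  (Module.End.isUnit_iff _).mp (.of_pow_eq_one (triflection_pow_three k) three_ne_zero)

lemma psiForm_triflection (k : Fin 12) (x y : A12) :
    psiForm (triflection k x) (triflection k y) = psiForm x y := by
  refine preReflection_isometry psiForm_conj_symm (psiForm_ηpow_right · k) ?_ x y
  rw [psiForm_ηpow_right, coroot_ηpow_self, map_sub, map_ofNat, conj_ω]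
  linear_combination -one_add_ω_mul_two_sub_ω

lemma triflection_braid (k : Fin 12) :
    triflection k * triflection (k + 1) * triflection k =
      triflection (k + 1) * triflection k * triflection (k + 1) := by
  apply preReflection_braid <;>
    rw [coroot_ηpow_self, coroot_ηpow_add_one, coroot_add_one_ηpow, neg_mul_neg, one_mul]

lemma triflection_commute {k l : Fin 12} (h : k - l ≠ 1) (h' : l - k ≠ 1) :
    Commute (triflection k) (triflection l) := by
  rcases eq_or_ne k l with rfl | hkl
  · exact Commute.refl _
  · exact preReflection_commute (coroot_ηpow_eq_zero hkl h h')
      (coroot_ηpow_eq_zero hkl.symm h' h)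

end Triflection

/-- For every `x ∈ A_𝒪` and `k ∈ ℤ/12` one has
`(1/3)(1 + ω)·ψ(x, ηᵏ) ∈ 𝒪`, so the formula `T̂ₖ(x) := x − (1/3)(1 + ω)·ψ(x, ηᵏ)·ηᵏ`
defines an 𝒪-linear endomorphism of `A_𝒪`.  Each `T̂ₖ` is a ψ-unitary automorphism of
order exactly 3, and the braid relations hold: `T̂ₖT̂ₖ₊₁T̂ₖ = T̂ₖ₊₁T̂ₖT̂ₖ₊₁`, and
`T̂ₖT̂ₗ = T̂ₗT̂ₖ` whenever `k − l ≢ ±1 (mod 12)`.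
(Here `ψ` is the Hermitian form on `A_𝒪` induced by `ψ₀`, and `T̂ₖ` is characterized
denominator-freely by: `T̂ₖ x = x − c • ηᵏ` whenever `(1 + ω)·ψ(x, ηᵏ) = 3c`.) -/
theorem statement15
    (ψA : A12 → A12 → O) (hψA : ∀ x y : B12, ψA (mkA x) (mkA y) = psi0 x y) :
    (∀ (x : A12) (k : Fin 12), ∃ c : O, (1 + ω) * ψA x (mkA (ηpow k)) = 3 * c) ∧
    (∃ T : Fin 12 → A12 → A12, ∀ (k : Fin 12) (x : A12) (c : O),
      (1 + ω) * ψA x (mkA (ηpow k)) = 3 * c → T k x = x - c • mkA (ηpow k)) ∧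
    (∀ T : Fin 12 → A12 → A12,
      (∀ (k : Fin 12) (x : A12) (c : O),
        (1 + ω) * ψA x (mkA (ηpow k)) = 3 * c → T k x = x - c • mkA (ηpow k)) →
      (∀ k : Fin 12,
        (∀ x y : A12, T k (x + y) = T k x + T k y) ∧
        (∀ (a : O) (x : A12), T k (a • x) = a • T k x) ∧
        Function.Bijective (T k) ∧
        (∀ x y : A12, ψA (T k x) (T k y) = ψA x y) ∧
        T k ∘ T k ∘ T k = id ∧ T k ≠ id) ∧
      (∀ k : Fin 12, T k ∘ T (k + 1) ∘ T k = T (k + 1) ∘ T k ∘ T (k + 1)) ∧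
      (∀ k l : Fin 12, k - l ≠ 1 → l - k ≠ 1 → T k ∘ T l = T l ∘ T k)) := by
  have hψ : ∀ x y, ψA x y = psiForm x y :=
    mkA_surjective.forall₂.mpr fun x y => (hψA x y).trans (psiForm_mkA x y).symm
  simp only [hψ, one_add_ω_mul_psiForm_eq_iff, forall_eq]
  refine ⟨fun x k => ⟨_, rfl⟩, ⟨fun k => triflection k, triflection_apply⟩, fun T hT => ?_⟩
  obtain rfl : T = fun k => ⇑(triflection k) := by
    ext k x
    rw [hT, triflection_apply]
  refine ⟨fun k => ⟨map_add _, map_smul _, triflection_bijective k, psiForm_triflection k, ?_, ?_⟩,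
    fun k => ?_, fun k l h h' => ?_⟩
  · exact congrArg DFunLike.coe ((pow_three _).symm.trans (triflection_pow_three k))
  · exact fun h => triflection_ne_one k (DFunLike.coe_injective h)
  · exact congrArg DFunLike.coe (triflection_braid k)
  · exact congrArg DFunLike.coe (triflection_commute h h')

end
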